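/- Let F be a formal group law over a commutative ring R and set p_F(z) := F^{0,1}(z,0)^{-1} ∈ R⟦z⟧. Then z^{-1}δ_F(w/z)·p_F(z) = z^{-1}δ_{F_a}(w/z) in R⟦z^{±1},w^{±1}⟧, where z^{-1}δ_{F_a}(w/z) = Σ_{n∈ℤ} w^n z^{-n-1} is the delta distribution of the additive formal group law. Consequently, Res^F_{z=0} z^{-1}δ_F(w/z) dz = 1 and Res^F_{w=0} z^{-1}δ_F(w/z) dw = z^{-1} · z = 1 (the F-residue in w of the bilateral series, taken coefficientwise in z, equals z^{-1}·z; explicitly both F-residues equal 1). -/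

import Mathlib

/-!
Coefficient-wise formal calculus for vertex `F`-algebras, following
M. Upmeier, "Vertex F-Algebras and Their Associated Lie Algebra".

Series in one, two or three variables are represented by their coefficient
functions `ℤ → R`, `ℤ → ℤ → R`, …; products are given by coefficient-wise
(finite) sums, expressed via `finsum` (`∑ᶠ`).
-/

open scoped BigOperators

noncomputable section

/-- Generalized binomial coefficient `C(n,k) = n(n-1)⋯(n-k+1)/k!` for `n : ℤ`, `k : ℕ`. -/
def zbinom (n : ℤ) (k : ℕ) : ℤ :=
  if 0 ≤ n then (n.toNat.choose k : ℤ)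
  else (-1 : ℤ) ^ k * (((k : ℤ) - n - 1).toNat.choose k : ℤ)

/-- `C(n,m)` for integer `m`, with `C(n,m) = 0` for `m < 0`. -/
def zbinomZ (n m : ℤ) : ℤ := if m < 0 then 0 else zbinom n m.toNat

/-- `(-1)^n` for `n : ℤ`. -/
def msign (n : ℤ) : ℤ := if Even n then 1 else -1

section Series

variable {R : Type*} [CommRing R] {M : Type*} [AddCommGroup M] [Module R M]

/-- Product of a one-variable series with `R`-coefficients with an `M`-valued one. -/
def mulS (f : ℤ → R) (g : ℤ → M) : ℤ → M := fun n => ∑ᶠ i : ℤ, f i • g (n - i)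

/-- The constant series `1` (one variable). -/
def oneS (R : Type*) [CommRing R] : ℤ → R := fun n => if n = 0 then 1 else 0

/-- Natural powers of a one-variable series. -/
def pow1 (f : ℤ → R) : ℕ → ℤ → R
  | 0 => oneS R
  | k + 1 => mulS f (pow1 f k)

/-- Product of two-variable series. -/
def mulS2 (f : ℤ → ℤ → R) (g : ℤ → ℤ → M) : ℤ → ℤ → M :=
  fun a b => ∑ᶠ p : ℤ × ℤ, f p.1 p.2 • g (a - p.1) (b - p.2)

/-- The constant series `1` (two variables). -/
def oneS2 (R : Type*) [CommRing R] : ℤ → ℤ → R := fun a b => if a = 0 ∧ b = 0 then 1 else 0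

/-- Natural powers of a two-variable series. -/
def pow2 (f : ℤ → ℤ → R) : ℕ → ℤ → ℤ → R
  | 0 => oneS2 R
  | k + 1 => mulS2 f (pow2 f k)

/-- `f ∈ M((z))`: only finitely many negative powers. -/
def IsLaurent (f : ℤ → M) : Prop := ∃ N : ℤ, ∀ n : ℤ, n < N → f n = 0

/-- `f ∈ M((z,w))`: only finitely many nonzero coefficients with some negative index. -/
def IsLaurent2 (f : ℤ → ℤ → M) : Prop :=
  {p : ℤ × ℤ | (p.1 < 0 ∨ p.2 < 0) ∧ f p.1 p.2 ≠ 0}.Finite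

/-- Formal derivative of a one-variable series. -/
def fderiv1 (f : ℤ → R) : ℤ → R := fun n => ((n + 1 : ℤ) : R) * f (n + 1)

/-- The polynomial `z - w` as a two-variable series. -/
def zmw (R : Type*) [CommRing R] : ℤ → ℤ → R :=
  fun i j => if i = 1 ∧ j = 0 then 1 else if i = 0 ∧ j = 1 then -1 else 0

/-- `∂/∂w` of a two-variable series. -/
def d01 (f : ℤ → ℤ → R) : ℤ → ℤ → R := fun i j => ((j + 1 : ℤ) : R) * f i (j + 1)

/-- `∂/∂z` of a two-variable series. -/
def d10 (f : ℤ → ℤ → R) : ℤ → ℤ → R := fun i j => ((i + 1 : ℤ) : R) * f (i + 1) j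

/-- Substitution `p(f(z,w))` of a two-variable series (zero constant term) into a
one-variable power series `p`. -/
def comp2 (p : ℤ → R) (f : ℤ → ℤ → R) : ℤ → ℤ → R :=
  fun a b => ∑ᶠ m : ℕ, p (m : ℤ) * pow2 f m a b

/-- Substitution `p(f(z))` of a one-variable series (zero constant term) into a
one-variable power series `p`. -/
def comp1 (p : ℤ → R) (f : ℤ → R) : ℤ → R :=
  fun a => ∑ᶠ m : ℕ, p (m : ℤ) * pow1 f m a

/-- `(G - z)/z` for `G ≡ z (mod w)`. -/
def hzS (G : ℤ → ℤ → R) : ℤ → ℤ → R := fun i j => G (i + 1) j - oneS2 R i j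

/-- Integer powers `i_{z,w} G^n`, for `G ≡ z (mod w)`, expanded in `R((z))⟦w⟧`:
the Newton expansion `z^n ∑_k C(n,k) ((G-z)/z)^k`. -/
def izwPow (G : ℤ → ℤ → R) (n : ℤ) : ℤ → ℤ → R :=
  fun a b => ∑ᶠ k : ℕ, (zbinom n k : R) * pow2 (hzS G) k (a - n) b

/-- `(G - w)/w` for `G ≡ w (mod z)`. -/
def hwS (G : ℤ → ℤ → R) : ℤ → ℤ → R := fun i j => G i (j + 1) - oneS2 R i j

/-- Integer powers `i_{w,z} G^n`, for `G ≡ w (mod z)`, expanded in `R((w))⟦z⟧`. -/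
def iwzPow (G : ℤ → ℤ → R) (n : ℤ) : ℤ → ℤ → R :=
  fun a b => ∑ᶠ k : ℕ, (zbinom n k : R) * pow2 (hwS G) k a (b - n)

/-- `(G + w)/(-w)` for `G ≡ ι(w) (mod z)`. -/
def hwNegS (G : ℤ → ℤ → R) : ℤ → ℤ → R := fun i j => -G i (j + 1) - oneS2 R i j

/-- Integer powers `i_{w,z} G^n`, for `G ≡ -w(1+⋯) (mod z)` (e.g. `G = F(z, ι w)`),
expanded in `R((w))⟦z⟧`. -/
def iwzPowNeg (G : ℤ → ℤ → R) (n : ℤ) : ℤ → ℤ → R :=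
  fun a b => (msign n : R) * ∑ᶠ k : ℕ, (zbinom n k : R) * pow2 (hwNegS G) k a (b - n)

/-- `(f + z)/(-z)` for a series `f = -z(1 + ⋯)` such as `ι(z)`. -/
def hS (f : ℤ → R) : ℤ → R := fun j => -f (j + 1) - oneS R j

/-- Integer powers `f(z)^n` (`n : ℤ`) for `f = -z(1+⋯)`, e.g. `f = ι(z)`. -/
def iotaPow (f : ℤ → R) (n : ℤ) : ℤ → R :=
  fun a => (msign n : R) * ∑ᶠ k : ℕ, (zbinom n k : R) * pow1 (hS f) k (a - n)

/-- `f - 1` for a power series with constant term `1`. -/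
def hOneS (f : ℤ → R) : ℤ → R := fun j => f j - oneS R j

/-- Multiplicative inverse of a power series with constant term `1`. -/
def invOne (f : ℤ → R) : ℤ → R :=
  fun a => ∑ᶠ k : ℕ, ((-1 : R) ^ k) * pow1 (hOneS f) k a

end Series

/-- A (one-dimensional, commutative) formal group law `F(z,w)` over `R`, together with
its (unique) inverse `ι`. -/
structure FormalGroupLaw (R : Type*) [CommRing R] where
  F : ℤ → ℤ → R
  F_supp : ∀ i j : ℤ, i < 0 ∨ j < 0 → F i j = 0
  /-- `F(z,0) = z`, so that `F(z,w) = z + w + O(zw)` using commutativity. -/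
  F_modw : ∀ i : ℤ, F i 0 = if i = 1 then 1 else 0
  F_comm : ∀ i j : ℤ, F i j = F j i
  /-- associativity `F(F(z,w),v) = F(z,F(w,v))`, coefficient-wise. -/
  F_assoc : ∀ a b c : ℤ,
    (∑ᶠ m : ℕ, F (m : ℤ) c * pow2 F m a b) = ∑ᶠ n : ℕ, F a (n : ℤ) * pow2 F n b c
  /-- the inverse `ι(z) = -z + O(z²)`. -/
  inv : ℤ → R
  inv_supp : ∀ n : ℤ, n < 1 → inv n = 0
  inv_one : inv 1 = -1
  /-- `F(z, ι(z)) = 0`, coefficient-wise. -/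
  inv_eq : ∀ n : ℤ, (∑ᶠ p : ℤ × ℕ, F p.1 (p.2 : ℤ) * pow1 inv p.2 (n - p.1)) = 0

namespace FormalGroupLaw

variable {R : Type*} [CommRing R] {M : Type*} [AddCommGroup M] [Module R M]

/-- The series `F(z, ι(w))`. -/
def Fzi (𝓕 : FormalGroupLaw R) : ℤ → ℤ → R :=
  fun i j => ∑ᶠ m : ℕ, 𝓕.F i (m : ℤ) * pow1 𝓕.inv m j

/-- The `F`-delta distribution `z⁻¹δ_F(w/z) = i_{z,w}F(z,ιw)⁻¹ - i_{w,z}F(z,ιw)⁻¹`. -/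
def delta (𝓕 : FormalGroupLaw R) : ℤ → ℤ → R :=
  fun a b => izwPow 𝓕.Fzi (-1) a b - iwzPowNeg 𝓕.Fzi (-1) a b

/-- `p_F(z) = F^{0,1}(z,0)⁻¹`, the coefficient series of the invariant 1-form. -/
def pF (𝓕 : FormalGroupLaw R) : ℤ → R := invOne (fun i => 𝓕.F i 1)

/-- `F`-residue: the coefficient of `z⁻¹` in `f(z)·p_F(z)`. -/
def resF (𝓕 : FormalGroupLaw R) (f : ℤ → M) : M := ∑ᶠ i : ℤ, 𝓕.pF i • f (-1 - i)

/-- The `F`-hyperderivative `𝒮^F_n f`, defined by `i_{z,w}f(F(z,w)) = ∑_n (𝒮^F_n f)(z) wⁿ`. -/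
def hyper (𝓕 : FormalGroupLaw R) (n : ℕ) (f : ℤ → R) : ℤ → R :=
  fun a => ∑ᶠ m : ℤ, f m * izwPow 𝓕.F m a (n : ℤ)

/-- `F`-binomial coefficients: `i_{z,w}F(z,w)^n = ∑_{i,j} binomF(n;i,j) z^i w^j`. -/
def binomF (𝓕 : FormalGroupLaw R) (n i j : ℤ) : R := izwPow 𝓕.F n i j

/-- `φ` is a logarithm of `F`: `φ(F(z,w)) = φ(z) + φ(w)`, `φ(0) = 0`, `φ'(0) = 1`. -/
def IsLogarithm (𝓕 : FormalGroupLaw R) (φ : ℤ → R) : Prop :=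
  (∀ n : ℤ, n < 0 → φ n = 0) ∧ φ 0 = 0 ∧ φ 1 = 1 ∧
  ∀ a b : ℤ, (∑ᶠ m : ℕ, φ (m : ℤ) * pow2 𝓕.F m a b)
    = (if b = 0 then φ a else 0) + (if a = 0 then φ b else 0)

end FormalGroupLaw

section Vertex

variable {R : Type*} [CommRing R] {V : Type*} [AddCommGroup V] [Module R V]

/-- For `c = ∑_m c_m v^m ∈ V((v))`, the substitution `v ↦ F(z,w)` (coefficient `(k,n)` of
`z^k w^n`, expanded in `V((z))⟦w⟧`). -/
def substF (𝓕 : FormalGroupLaw R) (c : ℤ → V) : ℤ → ℤ → V :=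
  fun k n => ∑ᶠ m : ℤ, izwPow 𝓕.F m k n • c m

/-- Coefficients of `i_{z,w} Y(a, F(z,w)) (Y(b,w)c)`, where `Ya v = Y(a,·)v` and
`d = Y(b,·)c`. -/
def substFProd (𝓕 : FormalGroupLaw R) (Ya : V → ℤ → V) (d : ℤ → V) : ℤ → ℤ → V :=
  fun k n => ∑ᶠ q : ℤ × ℤ, izwPow 𝓕.F q.1 k (n - q.2) • Ya (d q.2) q.1

end Vertex

/-- A vertex `F`-algebra `(V, 𝟙, 𝒮, Y)` over the formal group law `𝓕`.
`Y a b : ℤ → V` records the coefficients of `Y(a,z)b = ∑_k (Y a b k) z^k`, and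
`S n` is the component `𝒮⁽ⁿ⁾` of the `F`-shift operator `𝒮(z) = ∑_{n≥0} 𝒮⁽ⁿ⁾ zⁿ`. -/
structure VertexFAlgebra (R : Type*) [CommRing R] (𝓕 : FormalGroupLaw R)
    (V : Type*) [AddCommGroup V] [Module R V] where
  vac : V
  S : ℕ → V →ₗ[R] V
  Y : V →ₗ[R] V →ₗ[R] (ℤ → V)
  /-- `Y(a,z)b ∈ V((z))`. -/
  Y_laurent : ∀ a b : V, IsLaurent (Y a b)
  /-- `Y(a,z)𝟙` is holomorphic. -/
  vac_holo : ∀ (a : V) (k : ℤ), k < 0 → Y a vac k = 0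
  /-- `Y(a,z)𝟙|_{z=0} = a`. -/
  creation : ∀ a : V, Y a vac 0 = a
  /-- `Y(𝟙,z) = id`. -/
  Y_vac : ∀ (b : V) (k : ℤ), Y vac b k = if k = 0 then b else 0
  /-- `𝒮(0) = id`. -/
  S_zero : S 0 = LinearMap.id
  /-- `𝒮(z)𝟙 = 𝟙`. -/
  S_vac : ∀ n : ℕ, 1 ≤ n → S n vac = 0
  /-- `𝒮(z) ∘ 𝒮(w) = 𝒮(F(z,w))`, coefficient-wise. -/
  S_comp : ∀ (a : V) (i j : ℕ),
    S i (S j a) = ∑ᶠ m : ℕ, pow2 𝓕.F m (i : ℤ) (j : ℤ) • S m a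
  /-- `F`-translation covariance `Y(𝒮(w)a, z)b = i_{z,w} Y(a,F(z,w))b`. -/
  translation : ∀ (a b : V) (k : ℤ) (n : ℕ),
    Y (S n a) b k = substF 𝓕 (Y a b) k (n : ℤ)
  /-- weak `F`-associativity. -/
  weak_assoc : ∀ a b c : V, ∃ N : ℕ,
    mulS2 (pow2 𝓕.F N) (fun k l => Y (Y a b k) c l)
      = mulS2 (pow2 𝓕.F N) (substFProd 𝓕 (fun v => Y a v) (Y b c))
  /-- skew symmetry `Y(a,z)b = 𝒮(z)(Y(b,ι(z))a)`, coefficient-wise. -/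
  skew : ∀ (a b : V) (k : ℤ),
    Y a b k = ∑ᶠ q : ℕ × ℤ, iotaPow 𝓕.inv q.2 (k - (q.1 : ℤ)) • S q.1 (Y b a q.2)

end

open Function

namespace FormalSeries

section Finsum

variable {α β M : Type*} [AddCommMonoid M]

theorem finsum_eq_finsum_comp {f : β → M} {g : α → β} (hg : Injective g)
    (hf : support f ⊆ Set.range g) : ∑ᶠ b, f b = ∑ᶠ a, f (g a) := by
  rw [← finsum_mem_range hg, ← finsum_mem_univ f, ← finsum_mem_inter_support f Set.univ,
    ← finsum_mem_inter_support f (Set.range g), Set.univ_inter, Set.inter_eq_right.mpr hf]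

end Finsum

section Hahn

variable {R : Type*} [CommRing R]

/-- The index group of two-variable series, ordered lexicographically. -/
abbrev LexIdx := ℤ ×ₗ ℤ

/-- The coefficients of a Hahn series over `ℤ ×ₗ ℤ` as a bilateral series. -/
def lexCoeff (x : HahnSeries LexIdx R) : ℤ → ℤ → R := fun a b => x.coeff (toLex (a, b))

theorem lexCoeff_injective : Injective (lexCoeff (R := R)) := by
  intro x y h
  ext c
  exact congrFun (congrFun h (ofLex c).1) (ofLex c).2

theorem lexCoeff_mul (x y : HahnSeries LexIdx R) :
    lexCoeff (x * y) = mulS2 (lexCoeff x) (lexCoeff y) := by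
  funext a b
  simp only [lexCoeff, mulS2, HahnSeries.coeff_mul, smul_eq_mul]
  set s := Finset.antidiagonal x.isPWO_support y.isPWO_support (toLex (a, b))
  rw [finsum_eq_sum_of_support_subset (s := s.image fun p => ofLex p.1)]
  · rw [Finset.sum_image]
    · refine Finset.sum_congr rfl fun p hp => ?_
      have h : p.2 = toLex (a, b) - p.1 := by
        rw [← (Finset.mem_antidiagonal.mp hp).2.2]; abel
      rw [h]; rfl
    · intro p hp q hq hpq
      have h1 := (Finset.mem_antidiagonal.mp hp).2.2
      have h2 := (Finset.mem_antidiagonal.mp hq).2.2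
      have h3 : p.1 = q.1 := hpq
      refine Prod.ext h3 ?_
      rw [← h2, h3] at h1
      exact add_left_cancel h1
  · intro p hp
    have h := left_ne_zero_of_mul hp
    have h' := right_ne_zero_of_mul hp
    refine Finset.mem_coe.mpr (Finset.mem_image.mpr
      ⟨(toLex p, toLex (a - p.1, b - p.2)), Finset.mem_antidiagonal.mpr ⟨h, h', ?_⟩, rfl⟩)
    exact congrArg toLex (Prod.ext (add_sub_cancel _ _) (add_sub_cancel _ _))

theorem lexCoeff_one : lexCoeff (1 : HahnSeries LexIdx R) = oneS2 R := by
  funext a b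
  have : (toLex (a, b) : LexIdx) = 0 ↔ a = 0 ∧ b = 0 := Prod.ext_iff (x := (a, b)) (y := (0, 0))
  simp only [lexCoeff, oneS2, HahnSeries.coeff_one, this]

theorem lexCoeff_pow (x : HahnSeries LexIdx R) (k : ℕ) :
    lexCoeff (x ^ k) = pow2 (lexCoeff x) k := by
  induction k with
  | zero => exact lexCoeff_one
  | succ k ih => rw [pow_succ', lexCoeff_mul, ih, pow2]

theorem lexCoeff_mul_single (x : HahnSeries LexIdx R) (m n : ℤ) (a b : ℤ) :
    lexCoeff (x * HahnSeries.single (toLex (m, n)) 1) a b = lexCoeff x (a - m) (b - n) := by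
  simp only [lexCoeff, HahnSeries.coeff_mul_single, mul_one]
  rfl

theorem exists_lexCoeff_eq (f : ℤ → ℤ → R) (hf : ∀ i j, f i j ≠ 0 → 0 ≤ i ∧ -1 ≤ j) :
    ∃ x, lexCoeff x = f := by
  refine ⟨⟨fun c => f (ofLex c).1 (ofLex c).2, ?_⟩, rfl⟩
  have h : (Set.Ici ((0, -1) : ℤ × ℤ)).IsPWO := by
    have := (BddBelow.isWF (s := Set.Ici (0 : ℤ)) bddBelow_Ici).isPWO.prod
      (BddBelow.isWF (s := Set.Ici (-1 : ℤ)) bddBelow_Ici).isPWO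
    rwa [Set.Ici_prod_Ici] at this
  refine (h.image_of_monotone Prod.Lex.toLex_mono).mono fun c hc => ?_
  exact ⟨ofLex c, hf _ _ hc, rfl⟩

/-- The part of the delta distribution `∑ wⁿ z⁻ⁿ⁻¹` with nonnegative exponent of `z`. -/
def halfDelta (R : Type*) [CommRing R] : ℤ → ℤ → R :=
  fun i j => if 0 ≤ i ∧ i + j = -1 then 1 else 0

theorem exists_lexCoeff_eq_halfDelta : ∃ x, lexCoeff x = halfDelta R := by
  refine ⟨⟨fun c => if 0 ≤ (ofLex c).1 ∧ (ofLex c).1 + (ofLex c).2 = -1 then 1 else 0, ?_⟩, rfl⟩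
  have h : (Set.univ : Set ℕ).IsPWO := Set.isPWO_of_wellQuasiOrderedLE _
  refine (h.image_of_monotone (f := fun n : ℕ => (toLex ((n : ℤ), -1 - (n : ℤ)) : LexIdx)) ?_).mono
    fun c hc => ?_
  · refine StrictMono.monotone fun m n hmn => Prod.Lex.toLex_lt_toLex.mpr (Or.inl ?_)
    exact Int.ofNat_lt.mpr hmn
  · have hc' : 0 ≤ (ofLex c).1 ∧ (ofLex c).1 + (ofLex c).2 = -1 := by
      by_contra hcon
      exact hc (if_neg hcon)
    refine ⟨(ofLex c).1.toNat, trivial, congrArg toLex (Prod.ext ?_ ?_)⟩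
    · exact Int.toNat_of_nonneg hc'.1
    · change -1 - ((ofLex c).1.toNat : ℤ) = (ofLex c).2
      omega

theorem one_add_mul_eq_one {x : HahnSeries LexIdx R} (hx : ∀ i j, lexCoeff x i j ≠ 0 →
    0 < (toLex (i, j) : LexIdx)) :
    ∃ y, (1 + x) * y = 1 ∧
      lexCoeff y = fun a b => ∑ᶠ k : ℕ, (-1) ^ k * pow2 (lexCoeff x) k a b := by
  have hpos : 0 < (-x).orderTop := by
    rw [HahnSeries.orderTop_neg]
    by_cases h0 : x = 0
    · simp [h0]
    · rw [HahnSeries.orderTop_of_ne_zero h0]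
      refine WithTop.coe_lt_coe.mpr ?_
      exact hx _ _ (x.isWF_support.min_mem (HahnSeries.support_nonempty_iff.2 h0))
  refine ⟨(HahnSeries.SummableFamily.powers (-x)).hsum, ?_, ?_⟩
  · simpa using HahnSeries.SummableFamily.one_sub_self_mul_hsum_powers hpos
  · funext a b
    simp only [← lexCoeff_pow, lexCoeff, HahnSeries.SummableFamily.coeff_hsum]
    refine finsum_congr fun k => ?_
    rw [HahnSeries.SummableFamily.powers_of_orderTop_pos hpos, neg_pow]
    rcases Nat.even_or_odd k with h | h <;> simp [h.neg_one_pow]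

/-- If `u` is invertible with inverse `v` and `u * (w - z) = w * (1 + h)`, then the geometric
series of `-h` is the expansion of `w * v / (w - z)` in nonnegative powers of `z`. -/
theorem geom_eq_mulS2 (u v h : ℤ → ℤ → R)
    (hu : ∀ i j, u i j ≠ 0 → 0 ≤ i ∧ 0 ≤ j) (hv : ∀ i j, v i j ≠ 0 → 0 ≤ i ∧ 0 ≤ j)
    (hh : ∀ i j, h i j ≠ 0 → 0 ≤ i ∧ -1 ≤ j ∧ (i = 0 → 1 ≤ j))
    (huv : mulS2 u v = oneS2 R)
    (hg : ∀ i j, u i (j - 1) - u (i - 1) j = oneS2 R i (j - 1) + h i (j - 1)) (a b : ℤ) :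
    ∑ᶠ k : ℕ, (-1) ^ k * pow2 h k a b = mulS2 v (halfDelta R) a (b - 1) := by
  obtain ⟨U, rfl⟩ := exists_lexCoeff_eq u fun i j hij => (hu i j hij).imp_right (by omega)
  obtain ⟨V, rfl⟩ := exists_lexCoeff_eq v fun i j hij => (hv i j hij).imp_right (by omega)
  obtain ⟨H, rfl⟩ := exists_lexCoeff_eq h fun i j hij => ⟨(hh i j hij).1, (hh i j hij).2.1⟩
  obtain ⟨D, hD⟩ := exists_lexCoeff_eq_halfDelta (R := R)
  obtain ⟨Y, hY, hYc⟩ := one_add_mul_eq_one (x := H) fun i j hij => by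
    obtain ⟨h1, h2, h3⟩ := hh i j hij
    refine Prod.Lex.toLex_lt_toLex (x := ((0 : ℤ), (0 : ℤ))) |>.mpr ?_
    dsimp only
    omega
  set X₁ : HahnSeries LexIdx R := HahnSeries.single (toLex (1, 0)) 1
  set X₂ : HahnSeries LexIdx R := HahnSeries.single (toLex (0, 1)) 1
  have hUV : U * V = 1 := lexCoeff_injective (by rw [lexCoeff_mul, huv, lexCoeff_one])
  have hadd : ∀ (x y : HahnSeries LexIdx R) i j,
      lexCoeff (x + y) i j = lexCoeff x i j + lexCoeff y i j := fun _ _ _ _ => rfl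
  have hsub : ∀ (x y : HahnSeries LexIdx R) i j,
      lexCoeff (x - y) i j = lexCoeff x i j - lexCoeff y i j := fun _ _ _ _ => rfl
  have hUH : U * X₂ - U * X₁ = (1 + H) * X₂ := lexCoeff_injective <| by
    funext i j
    simp only [hsub, X₁, X₂, lexCoeff_mul_single, hadd, lexCoeff_one, sub_zero, hg]
  have hDX : D * X₂ - D * X₁ = 1 := lexCoeff_injective <| by
    funext i j
    simp only [hsub, X₁, X₂, lexCoeff_mul_single, lexCoeff_one, hD, halfDelta, oneS2,
      sub_zero]
    split_ifs <;> first | omega | simp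
  have hYV : Y = V * D * X₂ := by
    linear_combination (V * D * X₂) * hY + (Y * V * D) * hUH - (D * X₂ - D * X₁) * Y * hUV
      - Y * hDX
  rw [← congrFun (congrFun hYc a) b, hYV, lexCoeff_mul_single, lexCoeff_mul, hD, sub_zero]

end Hahn

end FormalSeries

namespace FormalSeries

section PowerSeries

variable {R : Type*} [CommRing R]

/-- A power series as a bilateral series. -/
noncomputable def ofPS (f : PowerSeries R) : ℤ → R := fun n =>
  if 0 ≤ n then PowerSeries.coeff n.toNat f else 0

@[simp] theorem ofPS_natCast (f : PowerSeries R) (n : ℕ) : ofPS f n = PowerSeries.coeff n f := by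
  simp [ofPS]

theorem ofPS_of_neg (f : PowerSeries R) {n : ℤ} (hn : n < 0) : ofPS f n = 0 :=
  if_neg (not_le.mpr hn)

theorem nonneg_of_ofPS_ne_zero {f : PowerSeries R} {n : ℤ} (h : ofPS f n ≠ 0) : 0 ≤ n :=
  not_lt.mp fun hn => h (ofPS_of_neg f hn)

theorem ofPS_mk {f : ℤ → R} (hf : ∀ n < 0, f n = 0) : ofPS (PowerSeries.mk fun n => f n) = f := by
  funext n
  rcases lt_or_ge n 0 with hn | hn
  · rw [ofPS_of_neg _ hn, hf n hn]
  · lift n to ℕ using hn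
    simp

theorem ofPS_one : ofPS (1 : PowerSeries R) = oneS R := by
  funext n
  rcases lt_or_ge n 0 with hn | hn
  · rw [ofPS_of_neg _ hn, oneS, if_neg hn.ne]
  · lift n to ℕ using hn
    simp [oneS, PowerSeries.coeff_one]

theorem ofPS_mul (f g : PowerSeries R) : ofPS (f * g) = mulS (ofPS f) (ofPS g) := by
  funext n
  have hsupp : ∀ i, ofPS f i • ofPS g (n - i) ≠ 0 → 0 ≤ i ∧ i ≤ n := fun i hi =>
    ⟨nonneg_of_ofPS_ne_zero (left_ne_zero_of_mul hi),
      sub_nonneg.mp (nonneg_of_ofPS_ne_zero (right_ne_zero_of_mul hi))⟩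
  rcases lt_or_ge n 0 with hn | hn
  · rw [ofPS_of_neg _ hn, mulS, finsum_eq_zero_of_forall_eq_zero]
    intro i
    by_contra h
    have := hsupp i h
    omega
  · lift n to ℕ using hn
    rw [mulS, finsum_eq_sum_of_support_subset
      (s := (Finset.HasAntidiagonal.antidiagonal n).image fun p => (p.1 : ℤ)), Finset.sum_image,
      ofPS_natCast, PowerSeries.coeff_mul]
    · refine Finset.sum_congr rfl fun p hp => ?_
      have : (n : ℤ) - p.1 = (p.2 : ℕ) := by
        have := Finset.HasAntidiagonal.mem_antidiagonal.mp hp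
        omega
      simp [this]
    · intro p hp q hq hpq
      have := Finset.HasAntidiagonal.mem_antidiagonal.mp hp
      have := Finset.HasAntidiagonal.mem_antidiagonal.mp hq
      have : p.1 = q.1 := Int.ofNat_inj.mp hpq
      exact Prod.ext this (by omega)
    · intro i hi
      obtain ⟨h0, h1⟩ := hsupp i hi
      lift i to ℕ using h0
      exact Finset.mem_coe.mpr (Finset.mem_image.mpr
        ⟨(i, n - i), Finset.HasAntidiagonal.mem_antidiagonal.mpr (by omega), rfl⟩)

theorem ofPS_pow (f : PowerSeries R) (k : ℕ) : ofPS (f ^ k) = pow1 (ofPS f) k := by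
  induction k with
  | zero => exact ofPS_one
  | succ k ih => rw [pow_succ', ofPS_mul, ih, pow1]

theorem coeff_pow_eq_zero {f : PowerSeries R} (hf : PowerSeries.constantCoeff f = 0) {n k : ℕ}
    (h : n < k) : PowerSeries.coeff n (f ^ k) = 0 :=
  PowerSeries.X_pow_dvd_iff.mp (pow_dvd_pow_of_dvd (PowerSeries.X_dvd_iff.mpr hf) k) n h

theorem mulS_invOne {q : PowerSeries R} (hq : PowerSeries.constantCoeff q = 1) :
    mulS (invOne (ofPS q)) (ofPS q) = oneS R := by
  obtain ⟨p, hp⟩ : ∃ p, q * p = 1 :=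
    (PowerSeries.isUnit_iff_constantCoeff.mpr (by simp [hq])).exists_right_inv
  have hsub : hOneS (ofPS q) = ofPS (q - 1) := by
    funext n
    rw [hOneS, ← ofPS_one]
    rcases lt_or_ge n 0 with hn | hn
    · simp [ofPS_of_neg _ hn]
    · lift n to ℕ using hn
      simp
  have h0 : PowerSeries.constantCoeff (q - 1) = 0 := by simp [hq]
  have hinv : invOne (ofPS q) = ofPS p := by
    funext n
    rw [invOne, hsub]
    simp only [← ofPS_pow]
    rcases lt_or_ge n 0 with hn | hn
    · simp [ofPS_of_neg _ hn]
    · lift n to ℕ using hn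
      have h0' : PowerSeries.constantCoeff (1 - q) = 0 := by simp [hq]
      have hgeom : p = (∑ k ∈ Finset.range (n + 1), (1 - q) ^ k) + (1 - q) ^ (n + 1) * p := by
        have := mul_neg_geom_sum (1 - q) (n + 1)
        rw [sub_sub_cancel] at this
        linear_combination (∑ k ∈ Finset.range (n + 1), (1 - q) ^ k) * hp - p * this
      rw [finsum_eq_sum_of_support_subset (s := Finset.range (n + 1)), ofPS_natCast, hgeom,
        map_add, PowerSeries.X_pow_dvd_iff.mp (Dvd.dvd.mul_right
          (pow_dvd_pow_of_dvd (PowerSeries.X_dvd_iff.mpr h0') (n + 1)) p) n (by omega),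
        add_zero, map_sum]
      · refine Finset.sum_congr rfl fun k _ => ?_
        have hk : (1 - q) ^ k = (-1) ^ k * (q - 1) ^ k := by rw [← mul_pow, neg_one_mul, neg_sub]
        rw [ofPS_natCast, hk]
        rcases Nat.even_or_odd k with h | h <;> simp [h.neg_one_pow]
      · intro k hk
        by_contra hkn
        have hnk : n < k := not_le.mp fun h =>
          hkn (Finset.mem_coe.mpr (Finset.mem_range.mpr (Nat.lt_succ_of_le h)))
        exact hk (by dsimp only; rw [ofPS_natCast, coeff_pow_eq_zero h0 hnk, mul_zero])
  rw [hinv, ← ofPS_mul, mul_comm, hp, ofPS_one]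

end PowerSeries

section MvPowerSeries

variable {R : Type*} [CommRing R]

/-- The exponent of the monomial `z ^ m * w ^ n`. -/
noncomputable def idx (m n : ℕ) : Fin 2 →₀ ℕ := Finsupp.equivFunOnFinite.symm ![m, n]

@[simp] theorem idx_zero (m n : ℕ) : idx m n 0 = m := rfl

theorem idx_eta (d : Fin 2 →₀ ℕ) : idx (d 0) (d 1) = d := by
  ext i
  fin_cases i <;> rfl

theorem idx_inj {m n m' n' : ℕ} : idx m n = idx m' n' ↔ m = m' ∧ n = n' :=
  ⟨fun h => ⟨DFunLike.congr_fun h 0, DFunLike.congr_fun h 1⟩, fun h => by rw [h.1, h.2]⟩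

theorem idx_add (m n m' n' : ℕ) : idx m n + idx m' n' = idx (m + m') (n + n') := by
  ext i
  fin_cases i <;> rfl

/-- A power series in two variables as a bilateral series. -/
noncomputable def ofMv (f : MvPowerSeries (Fin 2) R) : ℤ → ℤ → R := fun i j =>
  if 0 ≤ i ∧ 0 ≤ j then MvPowerSeries.coeff (idx i.toNat j.toNat) f else 0

/-- The nonnegative part of a bilateral series. -/
def toMv (f : ℤ → ℤ → R) : MvPowerSeries (Fin 2) R := fun d => f (d 0) (d 1)

@[simp] theorem coeff_toMv (f : ℤ → ℤ → R) (m n : ℕ) :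
    MvPowerSeries.coeff (idx m n) (toMv f) = f m n := rfl

@[simp] theorem ofMv_natCast (f : MvPowerSeries (Fin 2) R) (m n : ℕ) :
    ofMv f m n = MvPowerSeries.coeff (idx m n) f := by
  simp [ofMv]

theorem nonneg_of_ofMv_ne_zero {f : MvPowerSeries (Fin 2) R} {i j : ℤ} (h : ofMv f i j ≠ 0) :
    0 ≤ i ∧ 0 ≤ j :=
  not_not.mp fun hn => h (if_neg hn)

theorem ofMv_ext {f : MvPowerSeries (Fin 2) R} {g : ℤ → ℤ → R}
    (hg : ∀ i j, g i j ≠ 0 → 0 ≤ i ∧ 0 ≤ j)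
    (h : ∀ m n : ℕ, MvPowerSeries.coeff (idx m n) f = g m n) : ofMv f = g := by
  funext i j
  by_cases hij : 0 ≤ i ∧ 0 ≤ j
  · obtain ⟨hi, hj⟩ := hij
    lift i to ℕ using hi
    lift j to ℕ using hj
    rw [ofMv_natCast, h]
  · rw [not_not.mp fun h' => hij (hg i j h'), ofMv, if_neg hij]

theorem ofMv_toMv {f : ℤ → ℤ → R} (hf : ∀ i j, f i j ≠ 0 → 0 ≤ i ∧ 0 ≤ j) : ofMv (toMv f) = f :=
  ofMv_ext hf fun _ _ => rfl

theorem ofMv_one : ofMv (1 : MvPowerSeries (Fin 2) R) = oneS2 R := by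
  refine ofMv_ext (fun i j h => ?_) fun m n => ?_
  · have : i = 0 ∧ j = 0 := not_not.mp fun hn => h (if_neg hn)
    omega
  · have : idx m n = 0 ↔ m = 0 ∧ n = 0 := by
      rw [← idx_eta 0]
      exact idx_inj
    simp only [MvPowerSeries.coeff_one, oneS2, this, Nat.cast_eq_zero]

theorem ofMv_mul (f g : MvPowerSeries (Fin 2) R) : ofMv (f * g) = mulS2 (ofMv f) (ofMv g) := by
  have hsupp : ∀ a b (p : ℤ × ℤ), ofMv f p.1 p.2 • ofMv g (a - p.1) (b - p.2) ≠ 0 →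
      0 ≤ p.1 ∧ 0 ≤ p.2 ∧ p.1 ≤ a ∧ p.2 ≤ b := fun a b p hp => by
    have h1 := nonneg_of_ofMv_ne_zero (left_ne_zero_of_mul hp)
    have h2 := nonneg_of_ofMv_ne_zero (right_ne_zero_of_mul hp)
    omega
  refine ofMv_ext (fun i j h => ?_) fun m n => ?_
  · obtain ⟨p, hp⟩ := not_forall.mp fun hp => h (finsum_eq_zero_of_forall_eq_zero hp)
    have := hsupp i j p hp
    omega
  · rw [mulS2, finsum_eq_sum_of_support_subset
      (s := (Finset.HasAntidiagonal.antidiagonal (idx m n)).image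
        fun p => ((p.1 0 : ℤ), (p.1 1 : ℤ))),
      Finset.sum_image, MvPowerSeries.coeff_mul]
    · refine Finset.sum_congr rfl fun p hp => ?_
      have hadd := Finset.HasAntidiagonal.mem_antidiagonal.mp hp
      have h0 : p.1 0 + p.2 0 = m := DFunLike.congr_fun hadd 0
      have h1 : p.1 1 + p.2 1 = n := DFunLike.congr_fun hadd 1
      have h0' : (m : ℤ) - p.1 0 = (p.2 0 : ℕ) := by omega
      have h1' : (n : ℤ) - p.1 1 = (p.2 1 : ℕ) := by omega
      simp only [h0', h1', ofMv_natCast, idx_eta, smul_eq_mul]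
    · intro p hp q hq hpq
      have h1 := Finset.HasAntidiagonal.mem_antidiagonal.mp hp
      have h2 := Finset.HasAntidiagonal.mem_antidiagonal.mp hq
      have h3 : p.1 = q.1 := by
        rw [← idx_eta p.1, ← idx_eta q.1, Int.ofNat_inj.mp (congrArg Prod.fst hpq),
          Int.ofNat_inj.mp (congrArg Prod.snd hpq)]
      refine Prod.ext h3 ?_
      rw [← h2, h3] at h1
      exact add_left_cancel h1
    · rintro ⟨i, j⟩ hp
      obtain ⟨hi, hj, hm, hn⟩ := hsupp _ _ _ hp
      dsimp only at hi hj hm hn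
      lift i to ℕ using hi
      lift j to ℕ using hj
      refine Finset.mem_coe.mpr (Finset.mem_image.mpr
        ⟨(idx i j, idx (m - i) (n - j)), Finset.HasAntidiagonal.mem_antidiagonal.mpr ?_, rfl⟩)
      rw [idx_add, idx_inj]
      omega

theorem ofMv_pow (f : MvPowerSeries (Fin 2) R) (k : ℕ) : ofMv (f ^ k) = pow2 (ofMv f) k := by
  induction k with
  | zero => exact ofMv_one
  | succ k ih => rw [pow_succ', ofMv_mul, ih, pow2]

theorem hasSubst_X {s : PowerSeries R} (hs : PowerSeries.constantCoeff s = 0) :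
    MvPowerSeries.HasSubst (![PowerSeries.X, s] : Fin 2 → MvPowerSeries Unit R) := by
  refine MvPowerSeries.hasSubst_of_constantCoeff_zero fun i => ?_
  fin_cases i
  · exact PowerSeries.constantCoeff_X
  · exact hs

theorem coeff_subst_X {s : PowerSeries R} (hs : PowerSeries.constantCoeff s = 0)
    (f : MvPowerSeries (Fin 2) R) (n : ℕ) :
    PowerSeries.coeff n (MvPowerSeries.subst (![PowerSeries.X, s] : Fin 2 → MvPowerSeries Unit R) f)
      = ∑ i ∈ Finset.range (n + 1), ∑ m ∈ Finset.range (n + 1),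
        MvPowerSeries.coeff (idx i m) f * PowerSeries.coeff (n - i) (s ^ m) := by
  have key : ∀ d : Fin 2 →₀ ℕ, PowerSeries.coeff n (d.prod fun i e =>
      (![PowerSeries.X, s] : Fin 2 → PowerSeries R) i ^ e) =
        if d 0 ≤ n then PowerSeries.coeff (n - d 0) (s ^ d 1) else 0 := fun d => by
    rw [Finsupp.prod_fintype _ _ (by simp), Fin.prod_univ_two, ← PowerSeries.coeff_X_pow_mul']
    rfl
  rw [PowerSeries.coeff, MvPowerSeries.coeff_subst (hasSubst_X hs), ← Finset.sum_product',
    finsum_eq_sum_of_support_subset (s := (Finset.range (n + 1) ×ˢ Finset.range (n + 1)).image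
      fun p => idx p.1 p.2), Finset.sum_image]
  · refine Finset.sum_congr rfl fun p hp => ?_
    rw [Finset.mem_product, Finset.mem_range, Finset.mem_range] at hp
    refine congrArg₂ _ rfl ((key _).trans (if_pos ?_))
    rw [idx_zero]
    omega
  · intro p _ q _ hpq
    exact Prod.ext (idx_inj.mp hpq).1 (idx_inj.mp hpq).2
  · intro d hd
    have hd' : (if d 0 ≤ n then PowerSeries.coeff (n - d 0) (s ^ d 1) else 0) ≠ 0 :=
      (key d).symm.trans_ne (right_ne_zero_of_mul hd)
    obtain ⟨h0, h1⟩ := ite_ne_right_iff.mp hd'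
    have : d 1 ≤ n - d 0 := not_lt.mp fun h => h1 (coeff_pow_eq_zero hs h)
    refine Finset.mem_coe.mpr (Finset.mem_image.mpr ⟨(d 0, d 1), ?_, idx_eta d⟩)
    rw [Finset.mem_product, Finset.mem_range, Finset.mem_range]
    omega

end MvPowerSeries

end FormalSeries

namespace FormalGroupLaw

open FormalSeries

variable {R : Type*} [CommRing R] (𝓕 : FormalGroupLaw R)

/-- The formal group law as a power series. -/
noncomputable def mv : MvPowerSeries (Fin 2) R := toMv 𝓕.F

/-- The inverse as a power series. -/
noncomputable def invPS : PowerSeries R := PowerSeries.mk fun n => 𝓕.inv n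

/-- The power series `F^{0,1}(z,0)`. -/
noncomputable def qPS : PowerSeries R := PowerSeries.mk fun n => 𝓕.F n 1

theorem nonneg_of_F_ne_zero {i j : ℤ} (h : 𝓕.F i j ≠ 0) : 0 ≤ i ∧ 0 ≤ j := by
  by_contra hn
  exact h (𝓕.F_supp i j (by omega))

theorem F_zero_left (j : ℤ) : 𝓕.F 0 j = if j = 1 then 1 else 0 := by
  rw [𝓕.F_comm, 𝓕.F_modw]

theorem ofMv_mv : ofMv 𝓕.mv = 𝓕.F := ofMv_toMv fun _ _ => 𝓕.nonneg_of_F_ne_zero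

theorem ofPS_invPS : ofPS 𝓕.invPS = 𝓕.inv := ofPS_mk fun n hn => 𝓕.inv_supp n (by omega)

theorem ofPS_qPS : ofPS 𝓕.qPS = fun n => 𝓕.F n 1 :=
  ofPS_mk (f := fun n => 𝓕.F n 1) fun n hn => 𝓕.F_supp n 1 (Or.inl hn)

theorem constantCoeff_qPS : PowerSeries.constantCoeff 𝓕.qPS = 1 := by
  rw [← PowerSeries.coeff_zero_eq_constantCoeff_apply, qPS, PowerSeries.coeff_mk, Nat.cast_zero,
    F_zero_left, if_pos rfl]

theorem constantCoeff_invPS : PowerSeries.constantCoeff 𝓕.invPS = 0 := by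
  rw [← PowerSeries.coeff_zero_eq_constantCoeff_apply, invPS, PowerSeries.coeff_mk]
  exact 𝓕.inv_supp _ (by simp)

theorem pow1_inv (m : ℕ) : pow1 𝓕.inv m = ofPS (𝓕.invPS ^ m) := by rw [ofPS_pow, ofPS_invPS]

theorem pow1_inv_ne_zero {m : ℕ} {n : ℤ} (h : pow1 𝓕.inv m n ≠ 0) : (m : ℤ) ≤ n := by
  rw [pow1_inv] at h
  have hn := nonneg_of_ofPS_ne_zero h
  lift n to ℕ using hn
  rw [ofPS_natCast] at h
  exact_mod_cast not_lt.mp fun hlt => h (coeff_pow_eq_zero 𝓕.constantCoeff_invPS hlt)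

theorem nonneg_of_Fzi_ne_zero {i j : ℤ} (h : 𝓕.Fzi i j ≠ 0) : 0 ≤ i ∧ 0 ≤ j := by
  obtain ⟨m, hm⟩ := not_forall.mp fun hp => h (finsum_eq_zero_of_forall_eq_zero hp)
  have h1 := 𝓕.nonneg_of_F_ne_zero (left_ne_zero_of_mul hm)
  have h2 := 𝓕.pow1_inv_ne_zero (right_ne_zero_of_mul hm)
  omega

theorem Fzi_natCast (i : ℤ) {j n : ℕ} (h : j ≤ n) : 𝓕.Fzi i j =
    ∑ m ∈ Finset.range (n + 1), 𝓕.F i m * PowerSeries.coeff j (𝓕.invPS ^ m) := by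
  rw [Fzi, finsum_eq_sum_of_support_subset (s := Finset.range (n + 1))]
  · exact Finset.sum_congr rfl fun m _ => by rw [pow1_inv, ofPS_natCast]
  · intro m hm
    have := 𝓕.pow1_inv_ne_zero (right_ne_zero_of_mul hm)
    exact Finset.mem_coe.mpr (Finset.mem_range.mpr (by omega))

theorem Fzi_zero_right (i : ℤ) : 𝓕.Fzi i 0 = if i = 1 then 1 else 0 := by
  have := 𝓕.Fzi_natCast i (le_refl 0)
  simpa [F_modw] using this

theorem Fzi_zero_left (j : ℤ) : 𝓕.Fzi 0 j = 𝓕.inv j := by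
  rw [Fzi, finsum_eq_single _ 1]
  · rw [Nat.cast_one, F_zero_left, if_pos rfl, one_mul, pow1_inv, pow_one, ofPS_invPS]
  · intro m hm
    rw [F_zero_left, if_neg (by exact_mod_cast hm), zero_mul]

theorem sum_Fzi (n : ℕ) : ∑ i ∈ Finset.range (n + 1), 𝓕.Fzi i (n - i : ℕ) = 0 := by
  rw [← 𝓕.inv_eq n, finsum_eq_sum_of_support_subset
    (s := (Finset.range (n + 1) ×ˢ Finset.range (n + 1)).image fun p => ((p.1 : ℤ), p.2)),
    Finset.sum_image, Finset.sum_product]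
  · refine Finset.sum_congr rfl fun i hi => ?_
    rw [𝓕.Fzi_natCast i (Nat.sub_le n i)]
    refine Finset.sum_congr rfl fun m _ => ?_
    rw [← Nat.cast_sub (Finset.mem_range_succ_iff.mp hi), pow1_inv, ofPS_natCast]
  · intro p _ r _ hpr
    exact Prod.ext (Int.ofNat_inj.mp (Prod.ext_iff.mp hpr).1) (Prod.ext_iff.mp hpr).2
  · rintro ⟨i, m⟩ hp
    have h1 := (𝓕.nonneg_of_F_ne_zero (left_ne_zero_of_mul hp)).1
    have h2 := 𝓕.pow1_inv_ne_zero (right_ne_zero_of_mul hp)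
    dsimp only at h1 h2
    lift i to ℕ using h1
    refine Finset.mem_coe.mpr (Finset.mem_image.mpr ⟨(i, m), ?_, rfl⟩)
    rw [Finset.mem_product, Finset.mem_range, Finset.mem_range]
    omega

theorem pow2_F_ne_zero {m : ℕ} {i j : ℤ} (h : pow2 𝓕.F m i j ≠ 0) : 0 ≤ i ∧ 0 ≤ j := by
  rw [← ofMv_mv, ← ofMv_pow] at h
  exact nonneg_of_ofMv_ne_zero h

theorem pow2_F_zero_left (m : ℕ) (b : ℤ) : pow2 𝓕.F m 0 b = if b = m then 1 else 0 := by
  induction m generalizing b with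
  | zero => simp [pow2, oneS2]
  | succ m ih =>
    rw [pow2, mulS2, finsum_eq_single _ ((0 : ℤ), (1 : ℤ))]
    · simp [F_zero_left, ih, sub_eq_iff_eq_add]
    · rintro ⟨i, j⟩ hij
      by_contra h
      have h1 := 𝓕.nonneg_of_F_ne_zero (left_ne_zero_of_mul h)
      have h2 := 𝓕.pow2_F_ne_zero (right_ne_zero_of_mul h)
      dsimp only at h1 h2
      obtain rfl : i = 0 := by omega
      have h3 := left_ne_zero_of_mul h
      dsimp only at h3
      rw [F_zero_left] at h3
      exact hij (Prod.ext rfl (ite_ne_right_iff.mp h3).1)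

theorem pow2_F_one_left (m : ℕ) (b : ℤ) : pow2 𝓕.F m 1 b = m * 𝓕.F (b - m + 1) 1 := by
  induction m generalizing b with
  | zero => simp [pow2, oneS2]
  | succ m ih =>
    rw [pow2, mulS2, finsum_eq_sum_of_support_subset
      (s := {((0 : ℤ), (1 : ℤ)), ((1 : ℤ), b - m)})]
    · rw [Finset.sum_pair (by simp)]
      simp only [F_zero_left, sub_zero, sub_self, ih, pow2_F_zero_left, sub_sub_cancel, smul_eq_mul,
        if_true, one_mul, mul_one, 𝓕.F_comm 1, Nat.cast_add, Nat.cast_one]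
      rw [show b - 1 - (m : ℤ) + 1 = b - m by ring, show b - ((m : ℤ) + 1) + 1 = b - m by ring]
      ring
    · rintro ⟨i, j⟩ h
      have h1 := 𝓕.nonneg_of_F_ne_zero (left_ne_zero_of_mul h)
      have h2 := 𝓕.pow2_F_ne_zero (right_ne_zero_of_mul h)
      dsimp only at h1 h2
      obtain rfl | rfl : i = 0 ∨ i = 1 := by omega
      · have h3 := left_ne_zero_of_mul h
        dsimp only at h3
        rw [F_zero_left] at h3
        simp [(ite_ne_right_iff.mp h3).1]
      · have h3 := right_ne_zero_of_mul h
        dsimp only at h3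
        rw [sub_self, pow2_F_zero_left] at h3
        have := (ite_ne_right_iff.mp h3).1
        obtain rfl : j = b - m := by omega
        simp

/-- The power series `F^{1,0}(z,w)`. -/
noncomputable def pderivZ : MvPowerSeries (Fin 2) R :=
  toMv fun i j => ((i + 1 : ℤ) : R) * 𝓕.F (i + 1) j

/-- The power series `F^{0,1}(z,0)` in the variables `z` and `w`. -/
noncomputable def qMv : MvPowerSeries (Fin 2) R :=
  toMv fun i j => if j = 0 then 𝓕.F i 1 else 0

theorem hasSubst_mv : PowerSeries.HasSubst 𝓕.mv := by
  refine PowerSeries.HasSubst.of_constantCoeff_zero ?_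
  change 𝓕.F 0 0 = 0
  simp [F_modw]

theorem ofMv_pderivZ : ofMv 𝓕.pderivZ = d10 𝓕.F := by
  refine ofMv_toMv (f := d10 𝓕.F) fun i j h => ?_
  have h1 := 𝓕.nonneg_of_F_ne_zero (right_ne_zero_of_mul h)
  have h2 : i + 1 ≠ 0 := fun h0 => left_ne_zero_of_mul h (by rw [h0, Int.cast_zero])
  omega

theorem ofMv_qMv : ofMv 𝓕.qMv = fun i j => if j = 0 then 𝓕.F i 1 else 0 := by
  refine ofMv_toMv (f := fun i j => if j = 0 then 𝓕.F i 1 else 0) fun i j h => ?_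
  obtain ⟨rfl, h⟩ := ite_ne_right_iff.mp h
  exact ⟨(𝓕.nonneg_of_F_ne_zero h).1, le_rfl⟩

/-- The derivative in `x` at `x = 0` of the associativity law `F(F(x,z),w) = F(x,F(z,w))`. -/
theorem qMv_mul_pderivZ : 𝓕.qMv * 𝓕.pderivZ = PowerSeries.subst 𝓕.mv 𝓕.qPS := by
  ext d
  rw [← idx_eta d, ← ofMv_natCast, ofMv_mul, ofMv_qMv, ofMv_pderivZ,
    PowerSeries.coeff_subst 𝓕.hasSubst_mv]
  have hassoc := 𝓕.F_assoc 1 (d 0) (d 1)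
  calc _ = ∑ᶠ m : ℕ, 𝓕.F m (d 1) * pow2 𝓕.F m 1 (d 0) := ?_
    _ = _ := hassoc
    _ = _ := ?_
  · rw [mulS2, finsum_eq_finsum_comp (g := fun m : ℕ => ((d 0 : ℤ) - m + 1, (0 : ℤ)))]
    · refine finsum_congr fun m => ?_
      rw [pow2_F_one_left]
      simp only [d10, if_true, smul_eq_mul, sub_zero,
        show (d 0 : ℤ) - (d 0 - m + 1) + 1 = m by ring, Int.cast_natCast]
      ring
    · intro m n hmn
      have := congrArg Prod.fst hmn
      dsimp only at this
      omega
    · rintro ⟨i, j⟩ h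
      have h1 := left_ne_zero_of_mul h
      have h2 := 𝓕.nonneg_of_F_ne_zero (right_ne_zero_of_mul (right_ne_zero_of_mul h))
      dsimp only at h1 h2
      obtain ⟨rfl, -⟩ := ite_ne_right_iff.mp h1
      exact ⟨((d 0 : ℤ) - i + 1).toNat, Prod.ext (by dsimp only; omega) rfl⟩
  · refine finsum_congr fun n => ?_
    rw [smul_eq_mul, ← ofMv_natCast, ofMv_pow, ofMv_mv, qPS, PowerSeries.coeff_mk, 𝓕.F_comm]

/-- Substitution of `ι(z)` for `w`. -/
noncomputable def substInv : MvPowerSeries (Fin 2) R →ₐ[R] PowerSeries R :=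
  MvPowerSeries.substAlgHom (hasSubst_X 𝓕.constantCoeff_invPS)

theorem coeff_substInv (f : MvPowerSeries (Fin 2) R) (n : ℕ) :
    PowerSeries.coeff n (𝓕.substInv f) = ∑ i ∈ Finset.range (n + 1), ∑ m ∈ Finset.range (n + 1),
      MvPowerSeries.coeff (idx i m) f * PowerSeries.coeff (n - i) (𝓕.invPS ^ m) := by
  rw [substInv, MvPowerSeries.substAlgHom_apply, coeff_subst_X 𝓕.constantCoeff_invPS]

theorem substInv_mv : 𝓕.substInv 𝓕.mv = 0 := by
  ext n
  rw [coeff_substInv, map_zero, ← 𝓕.sum_Fzi n]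
  refine Finset.sum_congr rfl fun i _ => ?_
  rw [𝓕.Fzi_natCast i (Nat.sub_le n i)]
  rfl

theorem substInv_subst_mv : 𝓕.substInv (PowerSeries.subst 𝓕.mv 𝓕.qPS) = 1 := by
  have h : 𝓕.qPS =
      PowerSeries.X * PowerSeries.mk (fun p => PowerSeries.coeff (p + 1) 𝓕.qPS) + 1 := by
    conv_lhs => rw [PowerSeries.eq_X_mul_shift_add_const 𝓕.qPS, constantCoeff_qPS, map_one]
  rw [h, ← PowerSeries.coe_substAlgHom 𝓕.hasSubst_mv, map_add, map_mul, map_one,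
    PowerSeries.substAlgHom_X, map_add, map_mul, map_one, substInv_mv, zero_mul, zero_add]

theorem substInv_qMv : 𝓕.substInv 𝓕.qMv = 𝓕.qPS := by
  ext n
  rw [coeff_substInv, Finset.sum_eq_single n, Finset.sum_eq_single 0]
  · simp [qMv, qPS]
  · intro m _ hm
    simp [qMv, hm]
  · simp
  · intro i hi hin
    refine Finset.sum_eq_zero fun m _ => ?_
    rcases eq_or_ne m 0 with rfl | hm
    · have : n - i ≠ 0 := by
        have := Finset.mem_range.mp hi
        omega
      simp [PowerSeries.coeff_one, this]
    · simp [qMv, hm]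
  · simp

theorem coeff_substInv_pderivZ (n : ℕ) : PowerSeries.coeff n (𝓕.substInv 𝓕.pderivZ) =
    ∑ i ∈ Finset.range (n + 1), ((i + 1 : ℕ) : R) * 𝓕.Fzi (i + 1 : ℕ) (n - i : ℕ) := by
  rw [coeff_substInv]
  refine Finset.sum_congr rfl fun i _ => ?_
  rw [𝓕.Fzi_natCast _ (Nat.sub_le n i), Finset.mul_sum]
  refine Finset.sum_congr rfl fun m _ => ?_
  simp [pderivZ, mul_assoc]

/-- The quotient of `F(z,ι(w))` by `z - w`. -/
noncomputable def quot : MvPowerSeries (Fin 2) R := fun d =>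
  ∑ k ∈ Finset.range (d 1 + 1), 𝓕.Fzi (d 0 + k + 1 : ℕ) (d 1 - k : ℕ)

theorem coeff_quot (i j : ℕ) : MvPowerSeries.coeff (idx i j) 𝓕.quot =
    ∑ k ∈ Finset.range (j + 1), 𝓕.Fzi (i + k + 1 : ℕ) (j - k : ℕ) := rfl

theorem ofMv_quot_sub (a b : ℤ) : ofMv 𝓕.quot (a - 1) b - ofMv 𝓕.quot a (b - 1) = 𝓕.Fzi a b := by
  have hz : ∀ i j : ℤ, i < 0 ∨ j < 0 → ofMv 𝓕.quot i j = 0 := fun i j h =>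
    if_neg (by omega)
  by_cases hab : 0 ≤ a ∧ 0 ≤ b
  · obtain ⟨ha, hb⟩ := hab
    lift a to ℕ using ha
    lift b to ℕ using hb
    have hshift : ofMv 𝓕.quot a ((b : ℤ) - 1) =
        ∑ k ∈ Finset.range b, 𝓕.Fzi (a + (k + 1) : ℕ) (b - (k + 1) : ℕ) := by
      rcases b with _ | b
      · rw [hz _ _ (by omega), Finset.sum_range_zero]
      · rw [Nat.cast_succ, add_sub_cancel_right, ofMv_natCast, coeff_quot]
        simp only [Nat.add_sub_add_right, add_assoc]
    have hsum : ofMv 𝓕.quot ((a : ℤ) - 1) b =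
        ∑ k ∈ Finset.range (b + 1), 𝓕.Fzi (a + k : ℕ) (b - k : ℕ) := by
      rcases a with _ | a
      · simp only [hz _ _ (Or.inl (show ((0 : ℕ) : ℤ) - 1 < 0 by omega)), zero_add, sum_Fzi]
      · rw [Nat.cast_succ, add_sub_cancel_right, ofMv_natCast, coeff_quot]
        simp only [add_right_comm]
    rw [hsum, hshift, Finset.sum_range_succ', add_sub_cancel_left, add_zero, Nat.sub_zero]
  · rw [hz _ _ (by omega), hz _ _ (by omega), sub_zero]
    exact (not_not.mp fun h => hab (𝓕.nonneg_of_Fzi_ne_zero h)).symm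

/-- Substitution of `z` for `w`. -/
noncomputable def substDiag (R : Type*) [CommRing R] :
    MvPowerSeries (Fin 2) R →ₐ[R] PowerSeries R :=
  MvPowerSeries.substAlgHom (hasSubst_X PowerSeries.constantCoeff_X)

theorem coeff_substDiag (f : MvPowerSeries (Fin 2) R) (n : ℕ) :
    PowerSeries.coeff n (substDiag R f) =
      ∑ i ∈ Finset.range (n + 1), MvPowerSeries.coeff (idx i (n - i)) f := by
  rw [substDiag, MvPowerSeries.substAlgHom_apply, coeff_subst_X PowerSeries.constantCoeff_X]
  refine Finset.sum_congr rfl fun i _ => ?_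
  rw [Finset.sum_eq_single (n - i)]
  · simp
  · intro m _ hm
    rw [PowerSeries.coeff_X_pow, if_neg hm.symm, mul_zero]
  · intro h
    exact absurd (Finset.mem_range.mpr (by omega)) h

theorem substDiag_quot : substDiag R 𝓕.quot = 𝓕.substInv 𝓕.pderivZ := by
  ext n
  rw [coeff_substDiag, coeff_substInv_pderivZ]
  let g : ℕ → R := fun m => 𝓕.Fzi (m + 1 : ℕ) (n - m : ℕ)
  have := Finset.sum_range_diag_flip (n + 1) fun i k => g (i + k)
  calc _ = ∑ i ∈ Finset.range (n + 1), ∑ k ∈ Finset.range (n + 1 - i), g (i + k) := by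
        refine Finset.sum_congr rfl fun i hi => ?_
        rw [coeff_quot, Nat.sub_add_comm (Finset.mem_range_succ_iff.mp hi)]
        exact Finset.sum_congr rfl fun k _ => by simp only [g, Nat.sub_sub]
    _ = _ := this.symm
    _ = _ := by
        refine Finset.sum_congr rfl fun m _ => ?_
        rw [Finset.sum_congr rfl fun k hk => by
          rw [Nat.add_sub_cancel' (Finset.mem_range_succ_iff.mp hk)], Finset.sum_const,
          Finset.card_range, nsmul_eq_mul]

theorem qPS_mul_substDiag_quot : 𝓕.qPS * substDiag R 𝓕.quot = 1 := by
  rw [substDiag_quot, ← substInv_qMv, ← map_mul, qMv_mul_pderivZ, substInv_subst_mv]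

theorem finsum_diag (f : MvPowerSeries (Fin 2) R) (n : ℤ) :
    ∑ᶠ p : ℤ × ℤ, ofMv f p.1 p.2 * (if p.1 + p.2 = n then 1 else 0) = ofPS (substDiag R f) n := by
  have hsupp : ∀ p : ℤ × ℤ, ofMv f p.1 p.2 * (if p.1 + p.2 = n then 1 else 0) ≠ 0 →
      0 ≤ p.1 ∧ 0 ≤ p.2 ∧ p.1 + p.2 = n := fun p hp =>
    ⟨(nonneg_of_ofMv_ne_zero (left_ne_zero_of_mul hp)).1,
      (nonneg_of_ofMv_ne_zero (left_ne_zero_of_mul hp)).2,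
      (ite_ne_right_iff.mp (right_ne_zero_of_mul hp)).1⟩
  rcases lt_or_ge n 0 with hn | hn
  · rw [ofPS_of_neg _ hn, finsum_eq_zero_of_forall_eq_zero]
    intro p
    by_contra h
    have := hsupp p h
    omega
  · lift n to ℕ using hn
    rw [ofPS_natCast, coeff_substDiag, finsum_eq_sum_of_support_subset
      (s := (Finset.range (n + 1)).image fun i : ℕ => ((i : ℤ), ((n - i : ℕ) : ℤ))),
      Finset.sum_image]
    · refine Finset.sum_congr rfl fun i hi => ?_
      have := Finset.mem_range.mp hi
      rw [if_pos (by omega), mul_one, ofMv_natCast]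
    · intro i _ j _ hij
      exact Int.ofNat_inj.mp (Prod.ext_iff.mp hij).1
    · rintro ⟨i, j⟩ hp
      obtain ⟨h1, h2, h3⟩ := hsupp _ hp
      dsimp only at h1 h2 h3
      lift i to ℕ using h1
      exact Finset.mem_coe.mpr (Finset.mem_image.mpr
        ⟨i, Finset.mem_range.mpr (by omega), Prod.ext rfl (by dsimp only; omega)⟩)

theorem mulS2_swap (f g : ℤ → ℤ → R) (a b : ℤ) :
    mulS2 (fun i j => f j i) (fun i j => g j i) b a = mulS2 f g a b :=
  finsum_comp_equiv (Equiv.prodComm ℤ ℤ) (f := fun p : ℤ × ℤ => f p.1 p.2 • g (a - p.1) (b - p.2))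

theorem pow2_swap (f : ℤ → ℤ → R) (k : ℕ) :
    pow2 (fun i j => f j i) k = fun i j => pow2 f k j i := by
  induction k with
  | zero =>
    funext i j
    simp only [pow2, oneS2, and_comm]
  | succ k ih =>
    funext i j
    rw [pow2, ih, mulS2_swap, pow2]

theorem zbinom_neg_one (k : ℕ) : zbinom (-1) k = (-1) ^ k := by
  simp [zbinom]

theorem msign_neg_one : msign (-1) = -1 := by
  simp [msign]

/-- The inverse of the quotient of `F(z,ι(w))` by `z - w`. -/
noncomputable def quotInv : MvPowerSeries (Fin 2) R := Ring.inverse 𝓕.quot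

theorem quot_mul_quotInv : 𝓕.quot * 𝓕.quotInv = 1 := by
  refine Ring.mul_inverse_cancel _ (MvPowerSeries.isUnit_iff_constantCoeff.mpr ?_)
  rw [← MvPowerSeries.coeff_zero_eq_constantCoeff_apply, ← idx_eta 0]
  simp only [Finsupp.coe_zero, Pi.zero_apply, coeff_quot]
  simp [Fzi_zero_right]

theorem mulS2_quot_quotInv : mulS2 (ofMv 𝓕.quot) (ofMv 𝓕.quotInv) = oneS2 R := by
  rw [← ofMv_mul, quot_mul_quotInv, ofMv_one]

theorem substDiag_quotInv : substDiag R 𝓕.quotInv = 𝓕.qPS := by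
  have h := congrArg (substDiag R) 𝓕.quot_mul_quotInv
  rw [map_mul, map_one] at h
  linear_combination 𝓕.qPS * h - substDiag R 𝓕.quotInv * 𝓕.qPS_mul_substDiag_quot

theorem iwzPowNeg_Fzi (a b : ℤ) :
    iwzPowNeg 𝓕.Fzi (-1) a b = -mulS2 (ofMv 𝓕.quotInv) (halfDelta R) a b := by
  have h := geom_eq_mulS2 (ofMv 𝓕.quot) (ofMv 𝓕.quotInv) (hwNegS 𝓕.Fzi)
    (fun _ _ => nonneg_of_ofMv_ne_zero) (fun _ _ => nonneg_of_ofMv_ne_zero) ?_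
    𝓕.mulS2_quot_quotInv ?_ a (b + 1)
  · rw [add_sub_cancel_right] at h
    simp only [iwzPowNeg, zbinom_neg_one, msign_neg_one, sub_neg_eq_add, Int.cast_pow,
      Int.cast_neg, Int.cast_one, h, neg_one_mul]
  · intro i j hij
    by_cases h1 : 𝓕.Fzi i (j + 1) = 0
    · rw [hwNegS, h1, neg_zero, zero_sub, neg_ne_zero] at hij
      obtain ⟨⟨rfl, rfl⟩, -⟩ := ite_ne_right_iff.mp hij
      rw [Fzi_zero_left, zero_add, inv_one, neg_eq_zero] at h1
      rw [oneS2, if_pos ⟨rfl, rfl⟩] at hij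
      exact absurd h1 hij
    · have := 𝓕.nonneg_of_Fzi_ne_zero h1
      refine ⟨this.1, by omega, ?_⟩
      rintro rfl
      have hj0 : j ≠ 0 := by
        rintro rfl
        simp [hwNegS, Fzi_zero_left, inv_one, oneS2] at hij
      have hj1 : j ≠ -1 := by
        rintro rfl
        exact h1 (by rw [Fzi_zero_left, 𝓕.inv_supp _ (by norm_num)])
      omega
  · intro i j
    rw [hwNegS, sub_add_cancel, add_sub_cancel, ← ofMv_quot_sub, neg_sub]

theorem izwPow_Fzi (a b : ℤ) :
    izwPow 𝓕.Fzi (-1) a b = mulS2 (ofMv 𝓕.quotInv) (fun i j => halfDelta R j i) a b := by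
  have h := geom_eq_mulS2 (fun i j => ofMv 𝓕.quot j i) (fun i j => ofMv 𝓕.quotInv j i)
    (fun i j => hzS 𝓕.Fzi j i) (fun _ _ h => (nonneg_of_ofMv_ne_zero h).symm)
    (fun _ _ h => (nonneg_of_ofMv_ne_zero h).symm) ?_ ?_ ?_ b (a + 1)
  · rw [add_sub_cancel_right] at h
    simp only [izwPow, zbinom_neg_one, sub_neg_eq_add, Int.cast_pow, Int.cast_neg, Int.cast_one]
    rw [← mulS2_swap]
    simpa only [pow2_swap] using h
  · intro i j hij
    by_cases h1 : 𝓕.Fzi (j + 1) i = 0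
    · rw [hzS, h1, zero_sub, neg_ne_zero] at hij
      obtain ⟨⟨rfl, rfl⟩, -⟩ := ite_ne_right_iff.mp hij
      rw [Fzi_zero_right, if_pos (zero_add 1)] at h1
      rw [oneS2, if_pos ⟨rfl, rfl⟩] at hij
      exact absurd h1 hij
    · have := 𝓕.nonneg_of_Fzi_ne_zero h1
      refine ⟨this.2, by omega, ?_⟩
      rintro rfl
      simp [hzS, Fzi_zero_right, oneS2] at hij
  · funext i j
    rw [mulS2_swap, mulS2_quot_quotInv]
    simp only [oneS2, and_comm]
  · intro i j
    rw [hzS, sub_add_cancel, ofMv_quot_sub]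
    simp only [oneS2, and_comm, add_sub_cancel]

theorem delta_eq (a b : ℤ) : 𝓕.delta a b = ofPS 𝓕.qPS (a + b + 1) := by
  have hfin (f : ℤ → ℤ → R) (hf : ∀ p : ℤ × ℤ, 0 ≤ p.1 → 0 ≤ p.2 → f (a - p.1) (b - p.2) ≠ 0 →
      p.1 + p.2 = a + b + 1) :
      (support fun p : ℤ × ℤ => ofMv 𝓕.quotInv p.1 p.2 • f (a - p.1) (b - p.2)).Finite := by
    refine (Set.finite_Icc ((0 : ℤ), (0 : ℤ)) (a + b + 1, a + b + 1)).subset fun p hp => ?_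
    obtain ⟨h1, h2⟩ := nonneg_of_ofMv_ne_zero (left_ne_zero_of_mul hp)
    have h3 := hf p h1 h2 (right_ne_zero_of_mul hp)
    exact ⟨⟨h1, h2⟩, by dsimp only; omega, by dsimp only; omega⟩
  rw [delta, izwPow_Fzi, iwzPowNeg_Fzi, sub_neg_eq_add, mulS2, mulS2, ← finsum_add_distrib,
    ← substDiag_quotInv, ← finsum_diag]
  · refine finsum_congr fun p => ?_
    rw [← smul_add, smul_eq_mul]
    congr 1
    simp only [halfDelta]
    split_ifs <;> first | omega | simp
  · refine hfin (fun i j => halfDelta R j i) fun p _ _ h => ?_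
    have := (ite_ne_right_iff.mp h).1
    omega
  · refine hfin (halfDelta R) fun p _ _ h => ?_
    have := (ite_ne_right_iff.mp h).1
    omega

theorem finsum_pF_mul (n : ℤ) :
    ∑ᶠ i : ℤ, 𝓕.pF i * ofPS 𝓕.qPS (n - i) = if n = 0 then 1 else 0 := by
  have h := congrFun (mulS_invOne 𝓕.constantCoeff_qPS) n
  rwa [ofPS_qPS] at h ⊢

end FormalGroupLaw

/-- `z⁻¹δ_F(w/z)·p_F(z) = z⁻¹δ_{F_a}(w/z) = ∑_{n∈ℤ} wⁿ z^{-n-1}`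
(coefficient of `z^a w^b`), and consequently both `F`-residues of `z⁻¹δ_F(w/z)`
(in `z`, resp. in `w`) are equal to `1`. -/
theorem deltaF_pF (R : Type*) [CommRing R] (𝓕 : FormalGroupLaw R) :
    (∀ a b : ℤ, (∑ᶠ i : ℤ, 𝓕.pF i * 𝓕.delta (a - i) b)
        = if a + b = -1 then 1 else 0) ∧
    (∀ b : ℤ, 𝓕.resF (fun a => 𝓕.delta a b) = if b = 0 then (1 : R) else 0) ∧
    (∀ a : ℤ, 𝓕.resF (fun b => 𝓕.delta a b) = if a = 0 then (1 : R) else 0) := by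
  have hres (n : ℤ) (c : ℤ → ℤ) (hc : ∀ i, c i = n - i) :
      ∑ᶠ i : ℤ, 𝓕.pF i * FormalSeries.ofPS 𝓕.qPS (c i) = if n = 0 then 1 else 0 := by
    simp only [hc, 𝓕.finsum_pF_mul]
  simp only [FormalGroupLaw.resF, smul_eq_mul, FormalGroupLaw.delta_eq]
  refine ⟨fun a b => ?_, fun b => hres b _ fun i => by ring, fun a => hres a _ fun i => by ring⟩
  rw [hres (a + b + 1) _ fun i => by ring]
  simp only [add_eq_zero_iff_eq_neg]
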